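/- arXiv:2503.17066 — 4 statements merged into one kernel-verified Lean document; each statement's English description precedes it below -/
import Mathlib

section
/- Let Ξ ≥ 3 be a prime number and let η, ξ, ρ ≥ 0 be integers. Suppose integers μ₁, μ₂, μ₃ ≥ 1 and 1 ≤ ν₁, ν₂, ν₃ ≤ Ξ−1 satisfy the resonance equation Ξ^{-η}(Ξμ₁ − ν₁) + Ξ^{-ξ}(Ξμ₂ − ν₂) = Ξ^{-ρ}(Ξμ₃ − ν₃) in the real numbers. Then one of the following holds: (η = ξ and η ≥ ρ), or (η = ρ and ρ ≥ ξ), or (ξ = ρ and ρ ≥ η). -/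
/-!
In a vanishing sum of terms `p ^ e j * a j`, factoring out a strictly smallest power of `p` leaves
its coefficient plus a multiple of `p`, so `p` divides that coefficient. Since `Ξ` does not divide
`Ξ * μ - ν`, the smallest power of `Ξ` in the resonance equation must occur at least twice.
-/

section ScaledSums

variable {R K : Type*} [CommRing R] [Field K] [Algebra R K] [FaithfulSMul R K] {p : R}

theorem algebraMap_zpow_mul_eq_of_le (hp : p ≠ 0) {k l : ℤ} (hkl : k ≤ l) (a : R) :
    algebraMap R K p ^ l * algebraMap R K a =
      algebraMap R K p ^ k * algebraMap R K (p ^ (l - k).toNat * a) := by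
  have hp' : algebraMap R K p ≠ 0 := by simpa using hp
  rw [map_mul, map_pow, ← zpow_natCast, Int.toNat_of_nonneg (sub_nonneg.2 hkl), ← mul_assoc,
    ← zpow_add₀ hp', add_sub_cancel]

variable {ι : Type*} {s : Finset ι} {e : ι → ℤ} {a : ι → R} {i : ι}

theorem dvd_of_sum_zpow_mul_eq_zero (hp : p ≠ 0) (hi : i ∈ s)
    (hlt : ∀ j ∈ s, j ≠ i → e i < e j)
    (hsum : ∑ j ∈ s, algebraMap R K p ^ e j * algebraMap R K (a j) = 0) : p ∣ a i := by
  classical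
  have hp' : algebraMap R K p ≠ 0 := by simpa using hp
  have hlt' : ∀ j ∈ s.erase i, e i < e j := fun j hj =>
    hlt j (Finset.mem_of_mem_erase hj) (Finset.ne_of_mem_erase hj)
  have hfactor : algebraMap R K p ^ e i *
      algebraMap R K (a i + ∑ j ∈ s.erase i, p ^ (e j - e i).toNat * a j) = 0 := by
    rw [map_add, map_sum, mul_add, Finset.mul_sum, ← hsum, ← Finset.add_sum_erase s _ hi]
    exact congrArg _ (Finset.sum_congr rfl fun j hj =>
      (algebraMap_zpow_mul_eq_of_le hp (hlt' j hj).le (a j)).symm)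
  have hzero : a i + ∑ j ∈ s.erase i, p ^ (e j - e i).toNat * a j = 0 :=
    (FaithfulSMul.algebraMap_eq_zero_iff R K).1
      ((mul_eq_zero_iff_left (zpow_ne_zero _ hp')).1 hfactor)
  have hdvd : p ∣ ∑ j ∈ s.erase i, p ^ (e j - e i).toNat * a j :=
    Finset.dvd_sum fun j hj =>
      (dvd_pow_self p (by have := hlt' j hj; omega)).mul_right (a j)
  exact (dvd_add_left hdvd).1 (hzero ▸ dvd_zero p)

theorem exists_ne_le_of_sum_zpow_mul_eq_zero (hp : p ≠ 0) (hi : i ∈ s) (hdvd : ¬ p ∣ a i)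
    (hsum : ∑ j ∈ s, algebraMap R K p ^ e j * algebraMap R K (a j) = 0) :
    ∃ j ∈ s, j ≠ i ∧ e j ≤ e i := by
  by_contra! hlt
  exact hdvd (dvd_of_sum_zpow_mul_eq_zero hp hi hlt hsum)

theorem stmt_2_general (hp : p ≠ 0) (η ξ ρ : ℤ) {a b c : R}
    (ha : ¬ p ∣ a) (hb : ¬ p ∣ b) (hc : ¬ p ∣ c)
    (hres : algebraMap R K p ^ (-η) * algebraMap R K a + algebraMap R K p ^ (-ξ) * algebraMap R K b
      = algebraMap R K p ^ (-ρ) * algebraMap R K c) :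
    (η = ξ ∧ ρ ≤ η) ∨ (η = ρ ∧ ξ ≤ ρ) ∨ (ξ = ρ ∧ η ≤ ρ) := by
  have hsum : ∑ j, algebraMap R K p ^ ![-η, -ξ, -ρ] j * algebraMap R K (![a, b, -c] j) = 0 := by
    simpa [Fin.sum_univ_three, add_neg_eq_zero] using hres
  have hndvd : ∀ i, ¬ p ∣ ![a, b, -c] i := by
    simp [Fin.forall_fin_succ, ha, hb, hc]
  have hpair := fun i =>
    exists_ne_le_of_sum_zpow_mul_eq_zero hp (Finset.mem_univ i) (hndvd i) hsum
  have hη : η ≤ ξ ∨ η ≤ ρ := by simpa [Fin.exists_fin_succ] using hpair 0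
  have hξ : ξ ≤ η ∨ ξ ≤ ρ := by simpa [Fin.exists_fin_succ] using hpair 1
  have hρ : ρ ≤ η ∨ ρ ≤ ξ := by simpa [Fin.exists_fin_succ] using hpair 2
  omega

end ScaledSums

theorem not_dvd_mul_sub {p n : ℤ} (m : ℤ) (hn : 0 < n) (hnp : n < p) : ¬ p ∣ p * m - n := by
  rw [dvd_sub_right (dvd_mul_right p m)]
  exact fun hdvd => (Int.le_of_dvd hn hdvd).not_gt hnp

/-- resonance equation forces equality of two of the scales,
dominating the third accordingly. -/
theorem stmt_2 (Ξ : ℤ) (hprime : Prime Ξ) (hΞ : 3 ≤ Ξ) (η ξ ρ : ℕ)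
    (μ₁ μ₂ μ₃ ν₁ ν₂ ν₃ : ℤ)
    (hμ₁ : 1 ≤ μ₁) (hμ₂ : 1 ≤ μ₂) (hμ₃ : 1 ≤ μ₃)
    (hν₁ : 1 ≤ ν₁ ∧ ν₁ ≤ Ξ - 1) (hν₂ : 1 ≤ ν₂ ∧ ν₂ ≤ Ξ - 1)
    (hν₃ : 1 ≤ ν₃ ∧ ν₃ ≤ Ξ - 1)
    (hres : (Ξ : ℝ) ^ (-(η : ℤ)) * ((Ξ : ℝ) * (μ₁ : ℝ) - (ν₁ : ℝ))
          + (Ξ : ℝ) ^ (-(ξ : ℤ)) * ((Ξ : ℝ) * (μ₂ : ℝ) - (ν₂ : ℝ))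
          = (Ξ : ℝ) ^ (-(ρ : ℤ)) * ((Ξ : ℝ) * (μ₃ : ℝ) - (ν₃ : ℝ))) :
    (η = ξ ∧ ρ ≤ η) ∨ (η = ρ ∧ ξ ≤ ρ) ∨ (ξ = ρ ∧ η ≤ ρ) := by
  have hndvd (μ : ℤ) {ν : ℤ} (hν : 1 ≤ ν ∧ ν ≤ Ξ - 1) : ¬ Ξ ∣ Ξ * μ - ν :=
    not_dvd_mul_sub μ hν.1 (Int.lt_of_le_sub_one hν.2)
  exact_mod_cast stmt_2_general (K := ℝ) hprime.ne_zero η ξ ρ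
    (hndvd μ₁ hν₁) (hndvd μ₂ hν₂) (hndvd μ₃ hν₃) (by simpa using hres)
end

section
/- Let A > 0, B > 0 and T > 0 with ABT < 1. Let g : [0, T] → ℝ be a continuous nonnegative function satisfying g(t) ≥ A∫₀ᵗ g(s)² ds + B for every t ∈ [0, T]. Then g(t) ≥ B/(1 − ABt) for every t ∈ [0, T]. -/
open MeasureTheory intervalIntegral

/-!
Put `G t = A ∫ₐᵗ g² + B`. Since `G ≤ g`, the function `G` satisfies the same integral inequality as
`g`, so `H t = A ∫ₐᵗ G² + B` satisfies `H ≤ G ≤ g`. As `G` is continuous, `H` is differentiable with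
`H' = A G² ≥ A H²`; hence `-1 / H` grows at rate at least `A`, and `1 / H t ≤ 1 / B - A (t - a)`.
Since `1 / H t > 0`, this also forces `A B (t - a) < 1`.
-/

open Set

theorem mul_lt_one_and_div_le_of_le_inv_sub_inv {𝕜 : Type*} [Field 𝕜] [LinearOrder 𝕜]
    [IsStrictOrderedRing 𝕜] {c x y : 𝕜} (hx : 0 < x) (hy : 0 < y) (h : c ≤ x⁻¹ - y⁻¹) :
    c * x < 1 ∧ x / (1 - c * x) ≤ y := by
  have hinv : x / y ≤ 1 - c * x := by
    calc x / y = x * y⁻¹ := div_eq_mul_inv x y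
      _ ≤ x * (x⁻¹ - c) := by gcongr; linarith
      _ = 1 - c * x := by rw [mul_sub, mul_inv_cancel₀ hx.ne', mul_comm x c]
  have hpos : 0 < 1 - c * x := (div_pos hx hy).trans_le hinv
  exact ⟨sub_pos.1 hpos, (div_le_comm₀ hy hpos).1 hinv⟩

theorem mul_sub_le_inv_sub_inv_of_mul_sq_le_deriv {A a b : ℝ} {u u' : ℝ → ℝ} (hab : a ≤ b)
    (hcont : ContinuousOn u (Icc a b)) (hderiv : ∀ t ∈ Ioo a b, HasDerivAt u (u' t) t)
    (hne : ∀ t ∈ Icc a b, u t ≠ 0) (hle : ∀ t ∈ Ioo a b, A * u t ^ 2 ≤ u' t) :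
    A * (b - a) ≤ (u a)⁻¹ - (u b)⁻¹ := by
  have hderiv_neg_inv : ∀ t ∈ Ioo a b, HasDerivAt (fun x ↦ -(u x)⁻¹) (u' t / u t ^ 2) t := by
    intro t ht
    simpa only [neg_div, neg_neg] using
      ((hderiv t ht).fun_inv (hne t (Ioo_subset_Icc_self ht))).fun_neg
  have hgrowth : A * (b - a) ≤ -(u b)⁻¹ - -(u a)⁻¹ := by
    refine (convex_Icc a b).mul_sub_le_image_sub_of_le_deriv (hcont.fun_inv₀ hne).fun_neg ?_ ?_
      a (left_mem_Icc.2 hab) b (right_mem_Icc.2 hab) hab <;> rw [interior_Icc] <;> intro t ht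
    · exact (hderiv_neg_inv t ht).differentiableAt.differentiableWithinAt
    · rw [(hderiv_neg_inv t ht).deriv,
        le_div_iff₀ (sq_pos_of_ne_zero (hne t (Ioo_subset_Icc_self ht)))]
      exact hle t ht
  simpa only [neg_sub_neg] using hgrowth

section RiccatiPicard

variable {A B a b t : ℝ} {u v : ℝ → ℝ}

/-- The Picard operator of the Riccati initial value problem `u' = A u²`, `u a = B`: its fixed
points are the solutions, and the functions with `riccatiPicard A B a u ≤ u` are the supersolutions
in integral form. -/
noncomputable def riccatiPicard (A B a : ℝ) (u : ℝ → ℝ) (t : ℝ) : ℝ :=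
  A * (∫ s in a..t, u s ^ 2) + B

theorem riccatiPicard_left (A B a : ℝ) (u : ℝ → ℝ) : riccatiPicard A B a u a = B := by
  simp [riccatiPicard]

theorem le_riccatiPicard (hA : 0 ≤ A) (hat : a ≤ t) : B ≤ riccatiPicard A B a u t :=
  le_add_of_nonneg_left (mul_nonneg hA (integral_nonneg hat fun _ _ ↦ sq_nonneg _))

theorem riccatiPicard_mono (hA : 0 ≤ A) (hat : a ≤ t)
    (hu : IntervalIntegrable (fun s ↦ u s ^ 2) volume a t)
    (hv : IntervalIntegrable (fun s ↦ v s ^ 2) volume a t)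
    (hnonneg : ∀ s ∈ Icc a t, 0 ≤ u s) (huv : ∀ s ∈ Icc a t, u s ≤ v s) :
    riccatiPicard A B a u t ≤ riccatiPicard A B a v t := by
  have hsq : ∀ s ∈ Icc a t, u s ^ 2 ≤ v s ^ 2 := fun s hs ↦
    pow_le_pow_left₀ (hnonneg s hs) (huv s hs) 2
  unfold riccatiPicard
  gcongr
  exact integral_mono_on hat hu hv hsq

theorem continuousOn_riccatiPicard (hu : IntervalIntegrable (fun s ↦ u s ^ 2) volume a b) :
    ContinuousOn (riccatiPicard A B a u) (uIcc a b) :=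
  ((continuousOn_primitive_interval' hu left_mem_uIcc).const_mul A).add continuousOn_const

theorem hasDerivAt_riccatiPicard (hu : ContinuousOn u (Icc a b)) (ht : t ∈ Ioo a b) :
    HasDerivAt (riccatiPicard A B a u) (A * u t ^ 2) t := by
  have hsq : ContinuousOn (fun s ↦ u s ^ 2) (Icc a b) := hu.pow 2
  have hint : IntervalIntegrable (fun s ↦ u s ^ 2) volume a t :=
    (hsq.mono (Icc_subset_Icc_right ht.2.le)).intervalIntegrable_of_Icc ht.1.le
  have hprimitive : HasDerivAt (fun x ↦ ∫ s in a..x, u s ^ 2) (u t ^ 2) t :=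
    integral_hasDerivAt_right hint
      ((hsq.mono Ioo_subset_Icc_self).stronglyMeasurableAtFilter isOpen_Ioo t ht)
      (hsq.continuousAt (Icc_mem_nhds ht.1 ht.2))
  exact (hprimitive.const_mul A).add_const B

theorem mul_sub_le_inv_sub_inv_riccatiPicard (hA : 0 ≤ A) (hB : 0 < B) (hab : a ≤ b)
    (hcont : ContinuousOn u (Icc a b)) (hsuper : ∀ t ∈ Icc a b, riccatiPicard A B a u t ≤ u t) :
    A * (b - a) ≤ B⁻¹ - (riccatiPicard A B a u b)⁻¹ := by
  have hpos : ∀ t ∈ Icc a b, 0 < riccatiPicard A B a u t := fun t ht ↦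
    hB.trans_le (le_riccatiPicard hA ht.1)
  have hpicard_cont : ContinuousOn (riccatiPicard A B a u) (Icc a b) := by
    simpa only [uIcc_of_le hab] using
      continuousOn_riccatiPicard ((hcont.pow 2).intervalIntegrable_of_Icc hab)
  have hriccati : ∀ t ∈ Ioo a b, A * riccatiPicard A B a u t ^ 2 ≤ A * u t ^ 2 := fun t ht ↦
    have ht' := Ioo_subset_Icc_self ht
    mul_le_mul_of_nonneg_left (pow_le_pow_left₀ (hpos t ht').le (hsuper t ht') 2) hA
  simpa only [riccatiPicard_left] using
    mul_sub_le_inv_sub_inv_of_mul_sq_le_deriv hab hpicard_cont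
      (fun t ht ↦ hasDerivAt_riccatiPicard hcont ht) (fun t ht ↦ (hpos t ht).ne') hriccati

end RiccatiPicard

theorem stmt_9_general {A B a b : ℝ} (hA : 0 ≤ A) (hB : 0 < B) {g : ℝ → ℝ}
    (hint : IntervalIntegrable (fun s ↦ g s ^ 2) volume a b)
    (hineq : ∀ t ∈ Icc a b, A * (∫ s in a..t, g s ^ 2) + B ≤ g t) :
    ∀ t ∈ Icc a b, A * B * (t - a) < 1 ∧ B / (1 - A * B * (t - a)) ≤ g t := by
  intro t ⟨hat, htb⟩
  set G := riccatiPicard A B a g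
  have hint_to : ∀ s ∈ Icc a t, IntervalIntegrable (fun x ↦ g x ^ 2) volume a s := fun s hs ↦
    hint.mono_set (by grind [uIcc_of_le])
  have hGg : ∀ s ∈ Icc a t, G s ≤ g s := fun s hs ↦ hineq s ⟨hs.1, hs.2.trans htb⟩
  have hG_nonneg : ∀ s ∈ Icc a t, 0 ≤ G s := fun s hs ↦ hB.le.trans (le_riccatiPicard hA hs.1)
  have hG_cont : ContinuousOn G (Icc a t) := by
    simpa only [uIcc_of_le hat] using
      continuousOn_riccatiPicard (hint_to t (right_mem_Icc.2 hat))
  have hG_super : ∀ s ∈ Icc a t, riccatiPicard A B a G s ≤ G s := fun s hs ↦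
    have hsub : Icc a s ⊆ Icc a t := Icc_subset_Icc_right hs.2
    riccatiPicard_mono hA hs.1 (((hG_cont.mono hsub).pow 2).intervalIntegrable_of_Icc hs.1)
      (hint_to s hs) (fun x hx ↦ hG_nonneg x (hsub hx)) fun x hx ↦ hGg x (hsub hx)
  have hbound := mul_lt_one_and_div_le_of_le_inv_sub_inv hB (hB.trans_le (le_riccatiPicard hA hat))
    (mul_sub_le_inv_sub_inv_riccatiPicard hA hB hat hG_cont hG_super)
  rw [mul_right_comm] at hbound
  have ht : t ∈ Icc a t := right_mem_Icc.2 hat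
  exact ⟨hbound.1, hbound.2.trans ((hG_super t ht).trans (hGg t ht))⟩

/-- Gronwall-type lower bound for a continuous nonnegative function
satisfying g(t) ≥ A∫₀ᵗ g(s)² ds + B on [0,T], with ABT < 1. -/
theorem stmt_9 (A B T : ℝ) (hA : 0 < A) (hB : 0 < B) (hT : 0 < T)
    (hABT : A * B * T < 1) (g : ℝ → ℝ)
    (hcont : ContinuousOn g (Set.Icc 0 T))
    (hnonneg : ∀ t ∈ Set.Icc 0 T, 0 ≤ g t)
    (hineq : ∀ t ∈ Set.Icc 0 T, g t ≥ A * (∫ s in (0 : ℝ)..t, (g s) ^ 2) + B) :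
    ∀ t ∈ Set.Icc 0 T, g t ≥ B / (1 - A * B * t) := by
  have hint := (hcont.pow 2).intervalIntegrable_of_Icc (μ := volume) hT.le
  intro t ht
  simpa only [sub_zero] using (stmt_9_general hA.le hB hint hineq t ht).2
end

section
/- Let A > 0, B > 0 and T > 0 with ABT < 1. Let X : [0, T] → ℝ be a differentiable function with X(0) = 0 satisfying the differential inequality X'(t) ≥ (A X(t) + B)² for every t ∈ [0, T]. Then X(t) ≥ B² t/(1 − ABt) for every t ∈ [0, T]. -/
/-!
The equality case `Y' = (A Y + B) ^ 2`, `Y 0 = 0` is solved by `Y t = B ^ 2 * t / (1 - A * B * t)`.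
Clearing the denominator, put `z t = (1 - A * B * t) * X t - B ^ 2 * t`. As long as `A * B * t ≤ 1`,
the inequality for `X` gives the *linear* inequality `z' ≥ A * (A * X + B) * z`, whose coefficient
is bounded on compact intervals, so `z` stays nonnegative by a Gronwall argument. If `A * B > 0`,
then at the blow-up time `t = 1 / (A * B)` of `Y` this would read `-B ^ 2 * t ≥ 0`, so `X` cannot
exist that long.
-/

section

open Set

theorem nonneg_of_mul_le_deriv_right_of_neg {f f' : ℝ → ℝ} {a b K : ℝ}
    (hf : ContinuousOn f (Icc a b))
    (hf' : ∀ x ∈ Ico a b, HasDerivWithinAt f (f' x) (Ici x) x) (ha : 0 ≤ f a)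
    (bound : ∀ x ∈ Ico a b, f x < 0 → K * f x ≤ f' x) :
    ∀ x ∈ Icc a b, 0 ≤ f x := by
  -- The rate `K + 1` makes the barrier grow strictly faster than `-f` at a point of contact.
  let E : ℝ → ℝ := fun x ↦ Real.exp ((K + 1) * (x - a))
  have hE_pos (x : ℝ) : 0 < E x := Real.exp_pos _
  have hE_deriv (x : ℝ) : HasDerivAt E ((K + 1) * E x) x := by
    simpa [E, mul_comm] using (((hasDerivAt_id x).sub_const a).const_mul (K + 1)).exp
  have neg_le_barrier (ε : ℝ) (hε : 0 < ε) : ∀ x ∈ Icc a b, -f x ≤ ε * E x := by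
    refine image_le_of_deriv_right_lt_deriv_boundary hf.neg (fun x hx ↦ (hf' x hx).neg)
      ((neg_nonpos.2 ha).trans (mul_pos hε (hE_pos a)).le)
      (fun x ↦ (hE_deriv x).const_mul ε) fun x hx contact ↦ ?_
    have hεE : 0 < ε * E x := mul_pos hε (hE_pos x)
    have hfx : f x = -(ε * E x) := neg_eq_iff_eq_neg.1 contact
    have := bound x hx (by linarith)
    rw [hfx] at this
    linarith
  intro x hx
  refine neg_nonpos.1 (le_of_forall_pos_le_add fun ε hε ↦ ?_)
  simpa [div_mul_cancel₀ ε (hE_pos x).ne'] using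
    neg_le_barrier (ε / E x) (div_pos hε (hE_pos x)) x hx

variable {A B T : ℝ} {X X' : ℝ → ℝ}

theorem sq_mul_le_one_sub_mul_of_riccati_le (hABT : A * B * T ≤ 1) (hX0 : 0 ≤ X 0)
    (hX : ContinuousOn X (Icc 0 T))
    (hX' : ∀ t ∈ Ico 0 T, HasDerivWithinAt X (X' t) (Ici t) t)
    (hineq : ∀ t ∈ Ico 0 T, (A * X t + B) ^ 2 ≤ X' t) :
    ∀ t ∈ Icc 0 T, B ^ 2 * t ≤ (1 - A * B * t) * X t := by
  obtain ⟨K, hK⟩ : BddAbove ((fun t ↦ A * (A * X t + B)) '' Icc 0 T) :=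
    isCompact_Icc.bddAbove_image (by fun_prop)
  have one_sub_nonneg : ∀ t ∈ Icc 0 T, 0 ≤ 1 - A * B * t := by
    rintro t ⟨ht0, htT⟩
    rcases le_total 0 (A * B) with hAB | hAB
    · linarith [mul_le_mul_of_nonneg_left htT hAB]
    · linarith [mul_nonpos_of_nonpos_of_nonneg hAB ht0]
  let z : ℝ → ℝ := fun t ↦ (1 - A * B * t) * X t - B ^ 2 * t
  let z' : ℝ → ℝ := fun t ↦ (1 - A * B * t) * X' t - A * B * X t - B ^ 2
  have hz' : ∀ t ∈ Ico 0 T, HasDerivWithinAt z (z' t) (Ici t) t := by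
    intro t ht
    have hid := hasDerivWithinAt_id t (Ici t)
    refine ((((hid.const_mul (A * B)).const_sub 1).mul (hX' t ht)).sub
      (hid.const_mul (B ^ 2))).congr_deriv ?_
    simp only [z', id_eq]
    ring
  have linear_bound : ∀ t ∈ Ico 0 T, A * (A * X t + B) * z t ≤ z' t := by
    intro t ht
    calc A * (A * X t + B) * z t
        = (1 - A * B * t) * (A * X t + B) ^ 2 - A * B * X t - B ^ 2 := by ring
      _ ≤ z' t := by
        have := mul_le_mul_of_nonneg_left (hineq t ht)
          (one_sub_nonneg t (Ico_subset_Icc_self ht))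
        simp only [z']
        linarith
  intro t ht
  refine sub_nonneg.1 (nonneg_of_mul_le_deriv_right_of_neg (f := z) (K := K)
    (by fun_prop) hz' (by simpa [z] using hX0) (fun s hs hzs ↦ ?_) t ht)
  exact (mul_le_mul_of_nonpos_right (hK (mem_image_of_mem _ (Ico_subset_Icc_self hs)))
    hzs.le).trans (linear_bound s hs)

theorem mul_mul_lt_one_of_riccati_le (hT : 0 ≤ T) (hX0 : 0 ≤ X 0)
    (hX : ContinuousOn X (Icc 0 T))
    (hX' : ∀ t ∈ Ico 0 T, HasDerivWithinAt X (X' t) (Ici t) t)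
    (hineq : ∀ t ∈ Ico 0 T, (A * X t + B) ^ 2 ≤ X' t) :
    A * B * T < 1 := by
  by_contra! hABT
  have hAB : 0 < A * B := pos_of_mul_pos_left (one_pos.trans_le hABT) hT
  have hB : B ≠ 0 := right_ne_zero_of_mul hAB.ne'
  let s : ℝ := 1 / (A * B)
  have hs : 0 < s := one_div_pos.2 hAB
  have hsT : s ≤ T := (div_le_iff₀' hAB).2 hABT
  have hABs : A * B * s = 1 := mul_one_div_cancel hAB.ne'
  have hIco : Ico 0 s ⊆ Ico 0 T := Ico_subset_Ico_right hsT
  have hBs : B ^ 2 * s ≤ (1 - A * B * s) * X s :=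
    sq_mul_le_one_sub_mul_of_riccati_le hABs.le hX0 (hX.mono (Icc_subset_Icc_right hsT))
      (fun t ht ↦ hX' t (hIco ht)) (fun t ht ↦ hineq t (hIco ht)) s (right_mem_Icc.2 hs.le)
  rw [hABs, sub_self, zero_mul] at hBs
  exact hBs.not_gt (by positivity)

theorem stmt_10_general (hX0 : 0 ≤ X 0) (hX : ContinuousOn X (Icc 0 T))
    (hX' : ∀ t ∈ Ico 0 T, HasDerivWithinAt X (X' t) (Ici t) t)
    (hineq : ∀ t ∈ Ico 0 T, (A * X t + B) ^ 2 ≤ X' t) :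
    ∀ t ∈ Icc 0 T, B ^ 2 * t / (1 - A * B * t) ≤ X t := by
  rintro t ⟨ht0, htT⟩
  have hXt : ContinuousOn X (Icc 0 t) := hX.mono (Icc_subset_Icc_right htT)
  have hXt' : ∀ s ∈ Ico 0 t, HasDerivWithinAt X (X' s) (Ici s) s :=
    fun s hs ↦ hX' s (Ico_subset_Ico_right htT hs)
  have hineqt : ∀ s ∈ Ico 0 t, (A * X s + B) ^ 2 ≤ X' s :=
    fun s hs ↦ hineq s (Ico_subset_Ico_right htT hs)
  have hABt : A * B * t < 1 := mul_mul_lt_one_of_riccati_le ht0 hX0 hXt hXt' hineqt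
  rw [div_le_iff₀' (sub_pos.2 hABt)]
  exact sq_mul_le_one_sub_mul_of_riccati_le hABt.le hX0 hXt hXt' hineqt t (right_mem_Icc.2 ht0)

end

/-- the solution of the differential inequality
X' ≥ (AX + B)², X(0) = 0, satisfies X(t) ≥ B²t/(1 − ABt) on [0,T] when ABT < 1. -/
theorem stmt_10 (A B T : ℝ) (hA : 0 < A) (hB : 0 < B) (hT : 0 < T)
    (hABT : A * B * T < 1) (X X' : ℝ → ℝ) (hX0 : X 0 = 0)
    (hderiv : ∀ t ∈ Set.Icc 0 T, HasDerivWithinAt X (X' t) (Set.Icc 0 T) t)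
    (hineq : ∀ t ∈ Set.Icc 0 T, X' t ≥ (A * X t + B) ^ 2) :
    ∀ t ∈ Set.Icc 0 T, X t ≥ B ^ 2 * t / (1 - A * B * t) :=
  stmt_10_general hX0.ge (fun t ht ↦ (hderiv t ht).continuousWithinAt)
    (fun t ht ↦ (hderiv t (Set.Ico_subset_Icc_self ht)).mono_of_mem_nhdsWithin
      (Icc_mem_nhdsGE_of_mem ht))
    (fun t ht ↦ hineq t (Set.Ico_subset_Icc_self ht))
end

section
/- Let Ξ ≥ 3 be a prime number, let 𝔇 > 1 and R > 0. Let A be the set of finite Borel measures μ on ℝ such that (i) μ(ℝ \ ({0} ∪ ⋃_{η≥0} Θ_η)) = 0, (ii) 𝔇^η · μ(Θ_η) ≤ R for every integer η ≥ 0, and (iii) μ({0}) ≤ R. If (μ_n) is a sequence of measures in A that converges weakly to a finite Borel measure μ (i.e. ∫ φ dμ_n → ∫ φ dμ for every bounded continuous function φ : ℝ → ℝ), then μ ∈ A. -/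
open MeasureTheory Filter

/-- The lattice layer `Θ_η = {Ξ^{-η}(Ξμ − ν) : μ ≥ 1, 1 ≤ ν ≤ Ξ−1} ⊆ ℝ`. -/
def Theta (Ξ : ℤ) (η : ℕ) : Set ℝ :=
  {x | ∃ μ ν : ℤ, 1 ≤ μ ∧ 1 ≤ ν ∧ ν ≤ Ξ - 1 ∧
    x = (Ξ : ℝ) ^ (-(η : ℤ)) * ((Ξ : ℝ) * (μ : ℝ) - (ν : ℝ))}

/-- Membership in the set A: (i) the measure is concentrated on {0} ∪ ⋃ Θ_η,
(ii) 𝔇^η μ(Θ_η) ≤ R for all η ≥ 0, (iii) μ({0}) ≤ R. -/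
def MemA (Ξ : ℤ) (D R : ℝ) (μ : Measure ℝ) : Prop :=
  μ (({0} ∪ ⋃ η : ℕ, Theta Ξ η)ᶜ) = 0 ∧
  (∀ η : ℕ, ENNReal.ofReal (D ^ η) * μ (Theta Ξ η) ≤ ENNReal.ofReal R) ∧
  μ {0} ≤ ENNReal.ofReal R

/-!
On a closed discrete set `F` every subset is closed, so the complement of `F \ T` is an open set
containing `T`, whatever `T` is. If all measures of a family give the complement of `F` mass at
most `ε`, the portmanteau inequality for this open set turns a bound `c` on the mass of `T` into
the bound `c + ε` for weak limits. For the measures of `A` the set `F = Ξ^{-N}ℤ` contains `0` and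
the layers `Θ_0, …, Θ_N`, and `D > 1` makes the mass of the remaining layers uniformly small.
-/

open scoped ENNReal Topology

section WeakConvergence

variable {X : Type*} [MeasurableSpace X] [TopologicalSpace X] [OpensMeasurableSpace X]
  [HasOuterApproxClosed X]

theorem lowerSemicontinuous_measure_of_isOpen {U : Set X} (hU : IsOpen U) :
    LowerSemicontinuous fun μ : FiniteMeasure X => (μ : Measure X) U := by
  refine lowerSemicontinuous_iff_frequently.2 fun μ c hc => ?_
  have hmass : Tendsto (fun ν : FiniteMeasure X => (ν : Measure X) Set.univ) (𝓝 μ)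
      (𝓝 ((μ : Measure X) Set.univ)) := by
    simpa only [FiniteMeasure.ennreal_mass] using
      ENNReal.tendsto_coe.2 (FiniteMeasure.continuous_mass.tendsto μ)
  have hlimsup := FiniteMeasure.limsup_measure_closed_le_of_tendsto (tendsto_id (x := 𝓝 μ))
    hU.isClosed_compl
  suffices (μ : Measure X) Set.univ ≤ c + (μ : Measure X) Uᶜ by
    rw [← measure_add_measure_compl hU.measurableSet] at this
    exact (ENNReal.add_le_add_iff_right (measure_ne_top _ _)).1 this
  refine ENNReal.le_of_forall_pos_le_add fun ε hε _ => ?_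
  have hcompl : ∀ᶠ ν : FiniteMeasure X in 𝓝 μ, (ν : Measure X) Uᶜ < (μ : Measure X) Uᶜ + ε :=
    eventually_lt_of_limsup_lt <| hlimsup.trans_lt <|
      ENNReal.lt_add_right (measure_ne_top _ _) (ENNReal.coe_ne_zero.2 hε.ne')
  refine le_of_tendsto_of_frequently hmass <| (hc.and_eventually hcompl).mono fun ν hν => ?_
  rw [← measure_add_measure_compl hU.measurableSet, add_assoc]
  exact add_le_add hν.1 hν.2.le

theorem measure_le_of_mem_closure_of_measure_compl_le {s : Set (FiniteMeasure X)}
    (hs : ∀ ε : ℝ≥0∞, 0 < ε → ∃ F : Set X, IsClosed F ∧ IsDiscrete F ∧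
      ∀ ν ∈ s, (ν : Measure X) Fᶜ ≤ ε)
    {μ : FiniteMeasure X} (hμ : μ ∈ closure s) {T : Set X} {c : ℝ≥0∞}
    (hT : ∀ ν ∈ s, (ν : Measure X) T ≤ c) : (μ : Measure X) T ≤ c := by
  refine ENNReal.le_of_forall_pos_le_add fun ε hε _ => ?_
  obtain ⟨F, hFclosed, hFdiscrete, hF⟩ := hs ε (ENNReal.coe_pos.2 hε)
  have hopen : IsOpen (F \ T)ᶜ :=
    (isClosed_of_subset_discrete_closed Set.sdiff_subset hFdiscrete hFclosed).isOpen_compl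
  have hle : ∀ ν ∈ s, (ν : Measure X) (F \ T)ᶜ ≤ c + ε := fun ν hν =>
    calc (ν : Measure X) (F \ T)ᶜ = (ν : Measure X) (T ∪ Fᶜ) := by
          rw [Set.sdiff_eq, Set.compl_inter, compl_compl, Set.union_comm]
      _ ≤ (ν : Measure X) T + (ν : Measure X) Fᶜ := measure_union_le _ _
      _ ≤ c + ε := add_le_add (hT ν hν) (hF ν hν)
  calc (μ : Measure X) T ≤ (μ : Measure X) (F \ T)ᶜ := measure_mono fun _ hx hxF => hxF.2 hx
    _ ≤ c + ε :=
      closure_minimal hle ((lowerSemicontinuous_measure_of_isOpen hopen).isClosed_preimage _) hμ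

end WeakConvergence

theorem measure_compl_le_add_tsum {X : Type*} [MeasurableSpace X] (μ : Measure X)
    {F S : Set X} {T : ℕ → Set X} {N : ℕ} (hS : S ⊆ F) (hT : ∀ j < N, T j ⊆ F) :
    μ Fᶜ ≤ μ (S ∪ ⋃ j, T j)ᶜ + ∑' k, μ (T (k + N)) := by
  have hcover : Fᶜ ⊆ (S ∪ ⋃ j, T j)ᶜ ∪ ⋃ k, T (k + N) := by
    refine fun x hx => or_iff_not_imp_left.2 fun hxST => ?_
    rcases not_not.1 hxST with hxS | hxT
    · exact absurd (hS hxS) hx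
    · obtain ⟨j, hj⟩ := Set.mem_iUnion.1 hxT
      have hNj : N ≤ j := not_lt.1 fun hjN => hx (hT j hjN hj)
      exact Set.mem_iUnion.2 ⟨j - N, by rwa [Nat.sub_add_cancel hNj]⟩
  calc μ Fᶜ ≤ μ ((S ∪ ⋃ j, T j)ᶜ ∪ ⋃ k, T (k + N)) := measure_mono hcover
    _ ≤ μ (S ∪ ⋃ j, T j)ᶜ + μ (⋃ k, T (k + N)) := measure_union_le _ _
    _ ≤ μ (S ∪ ⋃ j, T j)ᶜ + ∑' k, μ (T (k + N)) := by gcongr; exact measure_iUnion_le _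

theorem tendsto_tsum_div_ofReal_pow_add {D : ℝ} (hD : 1 < D) {r : ℝ≥0∞} (hr : r ≠ ∞) :
    Tendsto (fun N => ∑' k, r / ENNReal.ofReal (D ^ (k + N))) atTop (𝓝 0) := by
  refine ENNReal.tendsto_sum_nat_add (fun k => r / ENNReal.ofReal (D ^ k)) ?_
  have hq : (ENNReal.ofReal D)⁻¹ < 1 := ENNReal.inv_lt_one.2 (ENNReal.one_lt_ofReal.2 hD)
  simp only [div_eq_mul_inv, ENNReal.ofReal_pow (zero_le_one.trans hD.le), ENNReal.inv_pow]
  rw [ENNReal.tsum_mul_left]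
  exact ENNReal.mul_ne_top hr (tsum_geometric_lt_top.2 hq).ne

theorem ofReal_mul_le_iff_le_div {a : ℝ} (ha : 0 < a) {x r : ℝ≥0∞} :
    ENNReal.ofReal a * x ≤ r ↔ x ≤ r / ENNReal.ofReal a := by
  rw [ENNReal.le_div_iff_mul_le (.inl (ENNReal.ofReal_pos.2 ha).ne') (.inl ENNReal.ofReal_ne_top),
    mul_comm]

theorem Theta_subset_zmultiples (Ξ : ℤ) {η N : ℕ} (hη : η ≤ N) :
    Theta Ξ η ⊆ AddSubgroup.zmultiples ((Ξ : ℝ) ^ N)⁻¹ := by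
  rintro _ ⟨m, v, -, hv, hvΞ, rfl⟩
  have hΞ : (Ξ : ℝ) ≠ 0 := Int.cast_ne_zero.2 (by omega)
  obtain ⟨d, rfl⟩ := Nat.exists_eq_add_of_le hη
  refine AddSubgroup.mem_zmultiples_iff.2 ⟨Ξ ^ d * (Ξ * m - v), ?_⟩
  rw [zsmul_eq_mul, zpow_neg, zpow_natCast, pow_add]
  push_cast
  field_simp

theorem MemA.measure_compl_zmultiples_le {Ξ : ℤ} {D R : ℝ} {μ : Measure ℝ} (h : MemA Ξ D R μ)
    (hD : 0 < D) (N : ℕ) :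
    μ (AddSubgroup.zmultiples ((Ξ : ℝ) ^ N)⁻¹ : Set ℝ)ᶜ ≤
      ∑' k, ENNReal.ofReal R / ENNReal.ofReal (D ^ (k + N)) := by
  obtain ⟨hsupport, hlayers, -⟩ := h
  refine (measure_compl_le_add_tsum μ (Set.singleton_subset_iff.2 (zero_mem _))
    fun j hj => Theta_subset_zmultiples Ξ hj.le).trans ?_
  rw [hsupport, zero_add]
  exact ENNReal.tsum_le_tsum fun k => (ofReal_mul_le_iff_le_div (pow_pos hD _)).1 (hlayers _)

theorem exists_isClosed_isDiscrete_forall_memA_measure_compl_le (Ξ : ℤ) {D : ℝ} (hD : 1 < D)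
    (R : ℝ) {ε : ℝ≥0∞} (hε : 0 < ε) :
    ∃ F : Set ℝ, IsClosed F ∧ IsDiscrete F ∧ ∀ μ : Measure ℝ, MemA Ξ D R μ → μ Fᶜ ≤ ε := by
  obtain ⟨N, hN⟩ :=
    ((tendsto_tsum_div_ofReal_pow_add hD (ENNReal.ofReal_ne_top (r := R))).eventually_le_const
      hε).exists
  exact ⟨AddSubgroup.zmultiples ((Ξ : ℝ) ^ N)⁻¹, AddSubgroup.isClosed_of_discrete,
    SetLike.isDiscrete_iff_discreteTopology.2 inferInstance,
    fun μ hμ => (hμ.measure_compl_zmultiples_le (zero_lt_one.trans hD) N).trans hN⟩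

theorem stmt_14_general (Ξ : ℤ) {D : ℝ} (hD : 1 < D) (R : ℝ) :
    IsClosed {μ : FiniteMeasure ℝ | MemA Ξ D R μ} := by
  refine isClosed_of_closure_subset fun μ hμ => ?_
  have hle {T : Set ℝ} {c : ℝ≥0∞}
      (hT : ∀ ν : FiniteMeasure ℝ, MemA Ξ D R ν → (ν : Measure ℝ) T ≤ c) :
      (μ : Measure ℝ) T ≤ c := by
    refine measure_le_of_mem_closure_of_measure_compl_le (fun ε hε => ?_) hμ hT
    obtain ⟨F, hclosed, hdiscrete, hF⟩ :=
      exists_isClosed_isDiscrete_forall_memA_measure_compl_le Ξ hD R hε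
    exact ⟨F, hclosed, hdiscrete, fun ν hν => hF ν hν⟩
  refine ⟨nonpos_iff_eq_zero.1 (hle fun ν hν => hν.1.le), fun η => ?_, hle fun ν hν => hν.2.2⟩
  have hDη : 0 < D ^ η := pow_pos (zero_lt_one.trans hD) η
  exact (ofReal_mul_le_iff_le_div hDη).2
    (hle fun ν hν => (ofReal_mul_le_iff_le_div hDη).1 (hν.2.1 η))

/-- the set A is closed under weak convergence of finite Borel
measures. -/
theorem stmt_14 (Ξ : ℤ) (hprime : Prime Ξ) (hΞ : 3 ≤ Ξ)
    (D R : ℝ) (hD : 1 < D) (hR : 0 < R)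
    (μs : ℕ → Measure ℝ) (μ : Measure ℝ)
    [∀ n, IsFiniteMeasure (μs n)] [IsFiniteMeasure μ]
    (hmem : ∀ n, MemA Ξ D R (μs n))
    (hconv : ∀ φ : BoundedContinuousFunction ℝ ℝ,
      Tendsto (fun n => ∫ x, φ x ∂(μs n)) atTop (nhds (∫ x, φ x ∂μ))) :
    MemA Ξ D R μ := by
  let μ' : FiniteMeasure ℝ := ⟨μ, ‹_›⟩
  let μs' : ℕ → FiniteMeasure ℝ := fun n => ⟨μs n, inferInstance⟩
  have hlim : Tendsto μs' atTop (𝓝 μ') :=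
    FiniteMeasure.tendsto_iff_forall_integral_tendsto.2 hconv
  exact (stmt_14_general Ξ hD R).mem_of_tendsto hlim (.of_forall hmem)
end
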